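/- arXiv:1608.02875 — 8 statements merged into one kernel-verified Lean document; each statement's English description precedes it below -/
import Mathlib

section
/- Let A and B be real symmetric positive definite p×p matrices and 0 < ε < 1 such that (1−ε)B ⪯ A ⪯ (1+ε)B in the Loewner order. For b ∈ ℝᵖ let x* = A⁻¹b and x¹ = B⁻¹b. Then ‖x¹ − x*‖_A ≤ ε‖x*‖_A. -/
open Matrix

/-- The `A`-norm `‖y‖_A = √(yᵀ A y)` for a positive definite matrix `A`. -/
noncomputable def anorm {p : ℕ} (A : Matrix (Fin p) (Fin p) ℝ) (y : Fin p → ℝ) : ℝ :=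
  Real.sqrt (y ⬝ᵥ (A *ᵥ y))

/-- if `(1-ε)B ⪯ A ⪯ (1+ε)B` (Loewner order) with `A, B` symmetric positive
definite and `0 < ε < 1`, then `x¹ = B⁻¹ b` approximates `x* = A⁻¹ b` with
`‖x¹ - x*‖_A ≤ ε ‖x*‖_A`. -/
theorem one_step_refinement_bound {p : ℕ} (A B : Matrix (Fin p) (Fin p) ℝ) (ε : ℝ)
    (hA : A.PosDef) (hB : B.PosDef) (hε0 : 0 < ε) (hε1 : ε < 1)
    (hlow : (A - (1 - ε) • B).PosSemidef) (hhigh : ((1 + ε) • B - A).PosSemidef)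
    (b : Fin p → ℝ) :
    anorm A (B⁻¹ *ᵥ b - A⁻¹ *ᵥ b) ≤ ε * anorm A (A⁻¹ *ᵥ b) := by
  have hAu : IsUnit A.det := hA.isUnit.map Matrix.detMonoidHom
  have hBu : IsUnit B.det := hB.isUnit.map Matrix.detMonoidHom
  have hAt : Aᵀ = A := by simpa using hA.isHermitian.eq
  have hBt : Bᵀ = B := by simpa using hB.isHermitian.eq
  obtain ⟨x, hx⟩ : ∃ x, x = A⁻¹ *ᵥ b := ⟨_, rfl⟩
  obtain ⟨y, hy⟩ : ∃ y, y = B⁻¹ *ᵥ b - A⁻¹ *ᵥ b := ⟨_, rfl⟩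
  have hAx : A *ᵥ x = b := by
    rw [hx, mulVec_mulVec, mul_nonsing_inv _ hAu, one_mulVec]
  have hBy : B *ᵥ y = A *ᵥ x - B *ᵥ x := by
    rw [hAx, hy, mulVec_sub, mulVec_mulVec, mul_nonsing_inv _ hBu, one_mulVec, ← hx]
  have symA : y ⬝ᵥ (A *ᵥ x) = x ⬝ᵥ (A *ᵥ y) := by
    rw [dotProduct_mulVec, ← mulVec_transpose, hAt, dotProduct_comm]
  have symB : y ⬝ᵥ (B *ᵥ x) = x ⬝ᵥ (B *ᵥ y) := by
    rw [dotProduct_mulVec, ← mulVec_transpose, hBt, dotProduct_comm]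
  have e1 : x ⬝ᵥ (B *ᵥ y) = x ⬝ᵥ (A *ᵥ x) - x ⬝ᵥ (B *ᵥ x) := by
    rw [hBy, dotProduct_sub]
  have e2 : y ⬝ᵥ (B *ᵥ y) = y ⬝ᵥ (A *ᵥ x) - y ⬝ᵥ (B *ᵥ x) := by
    rw [hBy, dotProduct_sub]
  have h1 := hhigh.dotProduct_mulVec_nonneg (y + ε • x)
  have h2 := hlow.dotProduct_mulVec_nonneg (ε • x - y)
  simp only [star_trivial, sub_mulVec, smul_mulVec, mulVec_add, mulVec_sub, mulVec_smul,
    dotProduct_add, dotProduct_sub, add_dotProduct, sub_dotProduct, smul_dotProduct,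
    dotProduct_smul, smul_eq_mul] at h1 h2
  rw [← hy, ← hx]
  have key : y ⬝ᵥ (A *ᵥ y) ≤ ε ^ 2 * (x ⬝ᵥ (A *ᵥ x)) := by
    rw [e2, symB, symA, e1] at h1 h2
    have h3 := mul_nonneg (by linarith : (0:ℝ) ≤ 1 + ε) h1
    have h4 := mul_nonneg (by linarith : (0:ℝ) ≤ 1 - ε) h2
    have h5 : 0 ≤ (2 * ε) * (ε ^ 2 * (x ⬝ᵥ (A *ᵥ x)) - y ⬝ᵥ (A *ᵥ y)) := by
      linarith
    have := nonneg_of_mul_nonneg_right h5 (by linarith)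
    linarith
  unfold anorm
  calc _ ≤ Real.sqrt (ε ^ 2 * (x ⬝ᵥ (A *ᵥ x))) := Real.sqrt_le_sqrt key
    _ = _ := by rw [Real.sqrt_mul (sq_nonneg ε), Real.sqrt_sq hε0.le]
end

section
/- Let A be a real p×p matrix, H an invertible real p×p matrix, g ∈ ℝᵖ, ε₀ ≥ 0, and suppose p̂ ∈ ℝᵖ satisfies ‖Hp̂ − g‖ ≤ ε₀‖g‖. Let ε₁ = ‖(A − H)H⁻¹‖. Then ‖Ap̂ − g‖ ≤ (ε₀ + (1+ε₀)ε₁)‖g‖. -/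
open Matrix

/-- Spectral norm: operator norm induced by the Euclidean vector norm. -/
noncomputable def specNorm {p : ℕ} (M : Matrix (Fin p) (Fin p) ℝ) : ℝ :=
  ‖Matrix.toEuclideanCLM (𝕜 := ℝ) M‖

/-- if `p̂` solves `H p = g` approximately, `‖H p̂ - g‖ ≤ ε₀ ‖g‖`, and
`ε₁ = ‖(A - H) H⁻¹‖`, then `‖A p̂ - g‖ ≤ (ε₀ + (1 + ε₀) ε₁) ‖g‖`. -/
theorem inexact_solve_residual_bound {p : ℕ}
    (A H : Matrix (Fin p) (Fin p) ℝ) (hH : IsUnit H.det)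
    (g phat : EuclideanSpace ℝ (Fin p)) (ε₀ : ℝ) (hε₀ : 0 ≤ ε₀)
    (hres : ‖Matrix.toEuclideanCLM (𝕜 := ℝ) H phat - g‖ ≤ ε₀ * ‖g‖) :
    ‖Matrix.toEuclideanCLM (𝕜 := ℝ) A phat - g‖ ≤
      (ε₀ + (1 + ε₀) * specNorm ((A - H) * H⁻¹)) * ‖g‖ := by
  have key : Matrix.toEuclideanCLM (𝕜 := ℝ) A phat - g =
      (Matrix.toEuclideanCLM (𝕜 := ℝ) H phat - g) +
        Matrix.toEuclideanCLM (𝕜 := ℝ) ((A - H) * H⁻¹)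
          (Matrix.toEuclideanCLM (𝕜 := ℝ) H phat) := by
    have h1 : Matrix.toEuclideanCLM (𝕜 := ℝ) ((A - H) * H⁻¹)
          (Matrix.toEuclideanCLM (𝕜 := ℝ) H phat) =
        Matrix.toEuclideanCLM (𝕜 := ℝ) ((A - H) * H⁻¹ * H) phat := by
      rw [map_mul _ ((A - H) * H⁻¹) H]
      rfl
    rw [h1, Matrix.mul_assoc, Matrix.nonsing_inv_mul H hH, Matrix.mul_one, map_sub,
      ContinuousLinearMap.sub_apply]
    abel
  have hH2 : ‖Matrix.toEuclideanCLM (𝕜 := ℝ) H phat‖ ≤ (1 + ε₀) * ‖g‖ := by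
    have := norm_le_norm_add_norm_sub' (Matrix.toEuclideanCLM (𝕜 := ℝ) H phat) g
    linarith
  have h3 : ‖Matrix.toEuclideanCLM (𝕜 := ℝ) ((A - H) * H⁻¹)
          (Matrix.toEuclideanCLM (𝕜 := ℝ) H phat)‖ ≤
      specNorm ((A - H) * H⁻¹) * ((1 + ε₀) * ‖g‖) :=
    (ContinuousLinearMap.le_opNorm _ _).trans
      (mul_le_mul_of_nonneg_left hH2 (norm_nonneg _))
  rw [key]
  refine (norm_add_le _ _).trans ((add_le_add hres h3).trans (le_of_eq ?_))
  ring
end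

section
/- Let A be a real p×p matrix, H an invertible real p×p matrix, G ∈ ℝᵖ with G ≠ 0, ε₀ ≥ 0, and g ∈ ℝᵖ with ‖g − G‖ ≤ ε₀‖G‖. Set p̂ = H⁻¹g and ε₁ = ‖(A − H)H⁻¹‖. Then ‖Ap̂ − G‖ ≤ (ε₀‖AH⁻¹‖ + ε₁)‖G‖. -/
open Matrix

/-- if `g` approximates the true gradient `G ≠ 0` with `‖g - G‖ ≤ ε₀ ‖G‖`,
`p̂ = H⁻¹ g` and `ε₁ = ‖(A - H) H⁻¹‖`, then `‖A p̂ - G‖ ≤ (ε₀ ‖A H⁻¹‖ + ε₁) ‖G‖`. -/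
theorem subsampled_gradient_residual_bound {p : ℕ}
    (A H : Matrix (Fin p) (Fin p) ℝ) (hH : IsUnit H.det)
    (G g phat : EuclideanSpace ℝ (Fin p)) (hG : G ≠ 0)
    (ε₀ : ℝ) (hε₀ : 0 ≤ ε₀)
    (hg : ‖g - G‖ ≤ ε₀ * ‖G‖)
    (hphat : phat = Matrix.toEuclideanCLM (𝕜 := ℝ) H⁻¹ g) :
    ‖Matrix.toEuclideanCLM (𝕜 := ℝ) A phat - G‖ ≤
      (ε₀ * specNorm (A * H⁻¹) + specNorm ((A - H) * H⁻¹)) * ‖G‖ := by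
  have hsub : (A - H) * H⁻¹ = A * H⁻¹ - 1 := by
    rw [sub_mul, Matrix.mul_nonsing_inv H hH]
  have key : Matrix.toEuclideanCLM (𝕜 := ℝ) A phat - G =
      Matrix.toEuclideanCLM (𝕜 := ℝ) (A * H⁻¹) (g - G) +
        Matrix.toEuclideanCLM (𝕜 := ℝ) ((A - H) * H⁻¹) G := by
    rw [hsub, hphat, map_sub (Matrix.toEuclideanCLM (𝕜 := ℝ)), map_one, map_mul]
    have hm : (Matrix.toEuclideanCLM (𝕜 := ℝ) A * Matrix.toEuclideanCLM (𝕜 := ℝ) H⁻¹) g =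
        Matrix.toEuclideanCLM (𝕜 := ℝ) A (Matrix.toEuclideanCLM (𝕜 := ℝ) H⁻¹ g) := rfl
    rw [← hm]
    simp only [map_sub, _root_.sub_apply, one_apply_eq_self]
    abel
  have h1 := (Matrix.toEuclideanCLM (𝕜 := ℝ) (A * H⁻¹)).le_opNorm (g - G)
  have h2 := (Matrix.toEuclideanCLM (𝕜 := ℝ) ((A - H) * H⁻¹)).le_opNorm G
  have h3 := mul_le_mul_of_nonneg_left hg
    (norm_nonneg (Matrix.toEuclideanCLM (𝕜 := ℝ) (A * H⁻¹)))
  rw [key]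
  refine (norm_add_le _ _).trans ?_
  unfold specNorm
  linarith
end

section
/- Let H_S be a real symmetric positive definite p×p matrix with orthonormal eigenvectors u₁,…,u_p and eigenvalues λ₁ ≥ λ₂ ≥ … ≥ λ_p > 0, let 1 ≤ r < p, let 0 < η ≤ 1, and define the NewSamp regularized matrix H = (1/η)( Σ_{i=1}^{r} (λ_i − λ_{r+1}) u_i u_iᵀ + λ_{r+1} I ). Then H is positive definite, ‖H⁻¹‖ = η/λ_{r+1}, and ‖I − H_S H⁻¹‖ = 1 − η λ_p/λ_{r+1}. -/
open Matrix

open scoped Matrix.Norms.L2Operator in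
theorem specNorm_conj_diagonal {p : ℕ} (U : Matrix (Fin p) (Fin p) ℝ) (h1 : Uᵀ * U = 1)
    (h2 : U * Uᵀ = 1) (v : Fin p → ℝ) : specNorm (U * diagonal v * Uᵀ) = ‖v‖ := by
  have hU : U ∈ unitary (Matrix (Fin p) (Fin p) ℝ) := by
    rw [Unitary.mem_iff]
    simp only [star_eq_conjTranspose, conjTranspose_eq_transpose_of_trivial]
    exact ⟨h1, h2⟩
  have hU' : Uᵀ ∈ unitary (Matrix (Fin p) (Fin p) ℝ) := by
    rw [Unitary.mem_iff]
    simp only [star_eq_conjTranspose, conjTranspose_eq_transpose_of_trivial, transpose_transpose]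
    exact ⟨h2, h1⟩
  have : specNorm (U * diagonal v * Uᵀ) = ‖U * diagonal v * Uᵀ‖ := by
    rw [specNorm, l2_opNorm_toEuclideanCLM]
  rw [this, CStarRing.norm_mul_mem_unitary _ hU', CStarRing.norm_mem_unitary_mul _ hU,
    l2_opNorm_diagonal]

theorem norm_eq_of_max {p : ℕ} (v : Fin p → ℝ) (c : ℝ) (h0 : ∀ i, 0 ≤ v i)
    (h1 : ∀ i, v i ≤ c) (k : Fin p) (hk : v k = c) : ‖v‖ = c := by
  apply le_antisymm
  · rw [pi_norm_le_iff_of_nonneg (hk ▸ h0 k)]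
    intro i
    rw [Real.norm_of_nonneg (h0 i)]
    exact h1 i
  · rw [← hk]
    exact (le_abs_self _).trans (norm_le_pi_norm v k)

/-- spectral identities for the NewSamp regularized matrix
`H = (1/η)(Σ_{i<r} (λᵢ - λᵣ) uᵢuᵢᵀ + λᵣ I)` (with `0`-based indexing, so `λ ⟨r⟩` is the
`(r+1)`-st eigenvalue), built from a symmetric positive definite `H_S` with orthonormal
eigenvectors `u i` and nonincreasing eigenvalues `λ`: `H` is positive definite,
`‖H⁻¹‖ = η/λ_{r+1}` and `‖I - H_S H⁻¹‖ = 1 - η λ_p / λ_{r+1}`. -/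
theorem newsamp_spectral_identities {p : ℕ}
    (HS : Matrix (Fin p) (Fin p) ℝ) (hsymm : HS.IsHermitian) (hpd : HS.PosDef)
    (u : Fin p → (Fin p → ℝ)) (lam : Fin p → ℝ)
    (horth : ∀ i j, u i ⬝ᵥ u j = if i = j then (1 : ℝ) else 0)
    (heig : ∀ i, HS *ᵥ u i = lam i • u i)
    (hdec : ∀ i j : Fin p, i ≤ j → lam j ≤ lam i)
    (hplast : 0 < p) (hpos : 0 < lam ⟨p - 1, by omega⟩)
    (r : ℕ) (hr1 : 1 ≤ r) (hrp : r < p)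
    (η : ℝ) (hη0 : 0 < η) (hη1 : η ≤ 1)
    (H : Matrix (Fin p) (Fin p) ℝ)
    (hHdef : H = (1 / η) •
      ((∑ i : Fin p, if (i : ℕ) < r
          then (lam i - lam ⟨r, hrp⟩) • Matrix.vecMulVec (u i) (u i)
          else 0) + lam ⟨r, hrp⟩ • (1 : Matrix (Fin p) (Fin p) ℝ))) :
    H.PosDef ∧ specNorm H⁻¹ = η / lam ⟨r, hrp⟩ ∧
      specNorm ((1 : Matrix (Fin p) (Fin p) ℝ) - HS * H⁻¹) =
        1 - η * lam ⟨p - 1, by omega⟩ / lam ⟨r, hrp⟩ := by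
  have hl : ∀ i, 0 < lam i := fun i =>
    hpos.trans_le (hdec _ _ (by rw [Fin.le_def]; simp only; omega))
  set R : Fin p := ⟨r, hrp⟩ with hR
  set P : Fin p := ⟨p - 1, by omega⟩ with hP
  have hRl := hl R
  set U : Matrix (Fin p) (Fin p) ℝ := (Matrix.of u)ᵀ with hUdef
  have h1 : Uᵀ * U = 1 := by
    ext i j
    rw [Matrix.one_apply, ← horth i j]
    rfl
  have h2 : U * Uᵀ = 1 := mul_eq_one_comm.mp h1
  have hcol : ∀ (M : Matrix (Fin p) (Fin p) ℝ) (d : Fin p → ℝ),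
      (∀ i, M *ᵥ u i = d i • u i) → M = U * diagonal d * Uᵀ := by
    intro M d hM
    have : M * U = U * diagonal d := by
      ext i j
      rw [Matrix.mul_diagonal]
      have := congrFun (hM j) i
      rw [Pi.smul_apply, smul_eq_mul, mul_comm] at this
      exact this
    rw [← this, Matrix.mul_assoc, h2, Matrix.mul_one]
  set h : Fin p → ℝ := fun i => (1 / η) * (if (i : ℕ) < r then lam i else lam R) with hh
  have hhpos : ∀ i, 0 < h i := by
    intro i
    simp only [hh]
    split_ifs
    · have := hl i
      positivity
    · positivity
  have hHS : HS = U * diagonal lam * Uᵀ := hcol _ _ heig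
  have hH : H = U * diagonal h * Uᵀ := by
    apply hcol
    intro j
    have hs : (∑ i : Fin p, if (i : ℕ) < r
          then (lam i - lam R) • Matrix.vecMulVec (u i) (u i) else 0) *ᵥ u j
        = (if (j : ℕ) < r then lam j - lam R else 0) • u j := by
      rw [Matrix.sum_mulVec, Finset.sum_eq_single j]
      · split_ifs
        · rw [Matrix.smul_mulVec, Matrix.vecMulVec_mulVec, horth]
          simp
        · simp
      · intro b _ hb
        split_ifs
        · rw [Matrix.smul_mulVec, Matrix.vecMulVec_mulVec, horth]
          simp [hb]
        · simp
      · simp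
    rw [hHdef, Matrix.smul_mulVec, Matrix.add_mulVec, hs, Matrix.smul_mulVec, Matrix.one_mulVec,
      ← add_smul, smul_smul]
    congr 1
    simp only [hh]
    split_ifs <;> ring
  have hmul : ∀ a b : Fin p → ℝ, (U * diagonal a * Uᵀ) * (U * diagonal b * Uᵀ)
      = U * diagonal (fun i => a i * b i) * Uᵀ := by
    intro a b
    calc _ = U * diagonal a * (Uᵀ * U) * diagonal b * Uᵀ := by simp only [Matrix.mul_assoc]
      _ = _ := by rw [h1, Matrix.mul_one, Matrix.mul_assoc U, Matrix.diagonal_mul_diagonal]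
  have hone : (1 : Matrix (Fin p) (Fin p) ℝ) = U * diagonal (fun _ => (1 : ℝ)) * Uᵀ := by
    rw [Matrix.diagonal_one, Matrix.mul_one, h2]
  have hinv : H⁻¹ = U * diagonal (fun i => (h i)⁻¹) * Uᵀ := by
    apply Matrix.inv_eq_right_inv
    rw [hH, hmul, hone]
    congr 3
    ext i
    exact mul_inv_cancel₀ (hhpos i).ne'
  refine ⟨?_, ?_, ?_⟩
  · rw [hH]
    have hd : (diagonal h).PosDef := Matrix.PosDef.diagonal hhpos
    have := hd.mul_mul_conjTranspose_same (B := U)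
      (Matrix.vecMul_injective_of_isUnit (IsUnit.of_mul_eq_one _ h2))
    rwa [conjTranspose_eq_transpose_of_trivial] at this
  · rw [hinv, specNorm_conj_diagonal U h1 h2]
    apply norm_eq_of_max _ _ (fun i => (inv_pos.mpr (hhpos i)).le) _ R
    · simp [hh, hR, div_eq_mul_inv, mul_comm]
    · intro i
      have : h R ≤ h i := by
        simp only [hh]
        gcongr
        simp only [hR, lt_irrefl, if_false]
        split_ifs with hi
        · exact hdec _ _ (by rw [Fin.le_def]; exact hi.le)
        · exact le_rfl
      calc (h i)⁻¹ ≤ (h R)⁻¹ := by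
            have := hhpos R
            gcongr
        _ = _ := by simp [hh, hR, div_eq_mul_inv, mul_comm]
  · have hM : 1 - HS * H⁻¹ = U * diagonal (fun i => 1 - lam i * (h i)⁻¹) * Uᵀ := by
      rw [hinv, hHS, hmul]
      nth_rewrite 1 [hone]
      rw [← Matrix.sub_mul, ← Matrix.mul_sub, Matrix.diagonal_sub]
    rw [hM, specNorm_conj_diagonal U h1 h2]
    have hv1 : ∀ i : Fin p, (i : ℕ) < r → lam i * (h i)⁻¹ = η := by
      intro i hi
      have := (hl i).ne'
      simp only [hh, if_pos hi]
      field_simp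
    have hv2 : ∀ i : Fin p, ¬ (i : ℕ) < r → lam i * (h i)⁻¹ = η * lam i / lam R := by
      intro i hi
      simp only [hh, if_neg hi]
      field_simp
    have hle : ∀ i : Fin p, ¬ (i : ℕ) < r → η * lam i / lam R ≤ η := by
      intro i hi
      rw [div_le_iff₀ hRl]
      have : lam i ≤ lam R := hdec _ _ (by rw [Fin.le_def]; exact not_lt.mp hi)
      gcongr
    have hPr : ¬ (P : ℕ) < r := by simp only [hP]; omega
    apply norm_eq_of_max _ _ _ _ P
    · simp only [hv2 P hPr]
    · intro i
      by_cases hi : (i : ℕ) < r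
      · simp only [hv1 i hi]; linarith
      · simp only [hv2 i hi]; linarith [hle i hi]
    · intro i
      by_cases hi : (i : ℕ) < r
      · simp only [hv1 i hi]; linarith [hle P hPr]
      · simp only [hv2 i hi]
        have : lam P ≤ lam i := hdec _ _ (by rw [Fin.le_def]; simp only [hP]; omega)
        gcongr
end

section
/- Let F : ℝᵖ → ℝ be twice continuously differentiable, and let x* ∈ ℝᵖ satisfy ∇F(x*) = 0 with ∇²F(x*) positive definite. Let 0 ≤ γ < 1 and let (x^t) be a sequence satisfying x^{t+1} = x^t − v^t where ‖∇²F(x^t)v^t − ∇F(x^t)‖ ≤ γ‖∇F(x^t)‖ for all t. Then for every γ' with γ < γ' < 1 there exists δ > 0 such that whenever ‖x⁰ − x*‖ ≤ δ, the sequence (x^t) converges to x* and ‖∇²F(x*)(x^{t+1} − x*)‖ ≤ γ'‖∇²F(x*)(x^t − x*)‖ for all t ≥ 0. -/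
open RealInnerProductSpace Filter

/-- linear convergence of inexact Newton. If `F` is twice continuously
differentiable, `∇F(x*) = 0` with positive definite Hessian at `x*`, and the iterates
satisfy `x^{t+1} = x^t - v^t` with `‖∇²F(x^t)v^t - ∇F(x^t)‖ ≤ γ‖∇F(x^t)‖`, `0 ≤ γ < 1`,
then for every `γ' ∈ (γ, 1)` there is `δ > 0` such that any such sequence started with
`‖x⁰ - x*‖ ≤ δ` converges to `x*` with
`‖∇²F(x*)(x^{t+1} - x*)‖ ≤ γ'‖∇²F(x*)(x^t - x*)‖` for all `t`. -/
theorem inexact_newton_linear_convergence {p : ℕ}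
    (F : EuclideanSpace ℝ (Fin p) → ℝ) (xs : EuclideanSpace ℝ (Fin p)) (γ : ℝ)
    (hF : ContDiff ℝ 2 F) (hcrit : gradient F xs = 0)
    (hpos : ∀ y : EuclideanSpace ℝ (Fin p), y ≠ 0 →
      0 < ⟪y, fderiv ℝ (gradient F) xs y⟫)
    (hγ0 : 0 ≤ γ) (hγ1 : γ < 1) :
    ∀ γ' : ℝ, γ < γ' → γ' < 1 → ∃ δ > (0 : ℝ),
      ∀ x : ℕ → EuclideanSpace ℝ (Fin p),
        (∀ t, ‖fderiv ℝ (gradient F) (x t) (x t - x (t + 1)) - gradient F (x t)‖ ≤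
          γ * ‖gradient F (x t)‖) →
        ‖x 0 - xs‖ ≤ δ →
        Tendsto x atTop (nhds xs) ∧
          ∀ t, ‖fderiv ℝ (gradient F) xs (x (t + 1) - xs)‖ ≤
            γ' * ‖fderiv ℝ (gradient F) xs (x t - xs)‖ := by
  intro γ' hγ' hγ'1
  have hG : ContDiff ℝ 1 (gradient F) := by
    have h1 : ContDiff ℝ 1 (fderiv ℝ F) := hF.fderiv_right (by norm_num)
    exact (InnerProductSpace.toDual ℝ (EuclideanSpace ℝ (Fin p))).symm.contDiff.comp h1
  generalize hGd : gradient F = G at *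
  have hdiff : DifferentiableAt ℝ G xs := (hG.differentiable (by norm_num)) xs
  have hcont : Continuous (fderiv ℝ G) := hG.continuous_fderiv (by norm_num)
  generalize hH : fderiv ℝ G xs = H at *
  have hker : LinearMap.ker (H : EuclideanSpace ℝ (Fin p) →ₗ[ℝ] EuclideanSpace ℝ (Fin p)) = ⊥ := by
    rw [LinearMap.ker_eq_bot']
    intro y hy
    by_contra hne
    have h := hpos y hne
    have hy' : H y = 0 := hy
    rw [hy', inner_zero_right] at h
    exact lt_irrefl _ h
  obtain ⟨K, hK, hanti⟩ := LinearMap.exists_antilipschitzWith _ hker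
  have hb : ∀ y, ‖y‖ ≤ (K : ℝ) * ‖H y‖ := by
    intro y
    have := hanti.le_mul_dist y 0
    simpa using this
  have hK0 : (0 : ℝ) < K := hK
  obtain ⟨s, hs⟩ : ∃ s, s = (γ' - γ) / 4 := ⟨_, rfl⟩
  have hs0 : 0 < s := by rw [hs]; linarith
  obtain ⟨η, hηd⟩ : ∃ η, η = s / K := ⟨_, rfl⟩
  have hη : 0 < η := by rw [hηd]; positivity
  have hηK : η * K = s := by rw [hηd]; field_simp
  have ev1 : ∀ᶠ z in nhds xs, ‖fderiv ℝ G z - H‖ ≤ η := by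
    have := (Metric.tendsto_nhds.1 (hcont.tendsto xs)) η hη
    filter_upwards [this] with z hz
    rw [hH, dist_eq_norm] at hz
    exact hz.le
  have ev2 : ∀ᶠ z in nhds xs, ‖G z - H (z - xs)‖ ≤ η * ‖z - xs‖ := by
    have h := hdiff.hasFDerivAt.isLittleO.def hη
    filter_upwards [h] with z hz
    rw [hH, hcrit, sub_zero] at hz
    exact hz
  obtain ⟨ε, hε, hball⟩ := Metric.eventually_nhds_iff.1 (ev1.and ev2)
  have step : ∀ a b : EuclideanSpace ℝ (Fin p), ‖a - xs‖ < ε →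
      ‖fderiv ℝ G a (a - b) - G a‖ ≤ γ * ‖G a‖ →
      ‖H (b - xs)‖ ≤ γ' * ‖H (a - xs)‖ := by
    intro a b ha hr
    obtain ⟨h1, h2⟩ := hball (by rwa [dist_eq_norm] : dist a xs < ε)
    generalize fderiv ℝ G a = A at *
    have hid : H (b - xs) = (H (a - xs) - G a) + (A - H) (a - xs)
        - (A (a - b) - G a) - (A - H) (b - xs) := by
      simp only [ContinuousLinearMap.sub_apply, map_sub]
      abel
    have n1 : ‖H (a - xs) - G a‖ ≤ η * ‖a - xs‖ := by rwa [norm_sub_rev]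
    have n2 : ‖(A - H) (a - xs)‖ ≤ η * ‖a - xs‖ := (A - H).le_of_opNorm_le h1 _
    have n3 : ‖(A - H) (b - xs)‖ ≤ η * ‖b - xs‖ := (A - H).le_of_opNorm_le h1 _
    have n4 : ‖G a‖ ≤ ‖H (a - xs)‖ + η * ‖a - xs‖ := by
      have := norm_le_norm_add_norm_sub (H (a - xs)) (G a)
      linarith
    have n5 : ‖H (b - xs)‖ ≤ ‖H (a - xs) - G a‖ + ‖(A - H) (a - xs)‖
        + ‖A (a - b) - G a‖ + ‖(A - H) (b - xs)‖ := by
      conv_lhs => rw [hid]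
      refine (norm_sub_le _ _).trans ?_
      gcongr
      refine (norm_sub_le _ _).trans ?_
      gcongr
      exact norm_add_le _ _
    have m1 : η * ‖a - xs‖ ≤ s * ‖H (a - xs)‖ := by
      rw [← hηK, mul_assoc]; exact mul_le_mul_of_nonneg_left (hb _) hη.le
    have m2 : η * ‖b - xs‖ ≤ s * ‖H (b - xs)‖ := by
      rw [← hηK, mul_assoc]; exact mul_le_mul_of_nonneg_left (hb _) hη.le
    have hA := norm_nonneg (H (a - xs))
    generalize ‖H (b - xs)‖ = u at *
    generalize ‖H (a - xs)‖ = w at *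
    have m3 : γ * ‖G a‖ ≤ γ * w + s * w := by
      have q1 : γ * ‖G a‖ ≤ γ * (w + s * w) := mul_le_mul_of_nonneg_left (by linarith) hγ0
      have q2 : γ * (s * w) ≤ 1 * (s * w) :=
        mul_le_mul_of_nonneg_right hγ1.le (by positivity)
      linarith
    have m4 : (1 - s) * u ≤ (γ + 3 * s) * w := by linarith
    have m5 : (γ + 3 * s) * w ≤ (1 - s) * (γ' * w) := by
      have : γ + 3 * s ≤ (1 - s) * γ' := by nlinarith
      nlinarith [mul_le_mul_of_nonneg_right this hA]
    exact le_of_mul_le_mul_left (m4.trans m5) (by linarith)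
  have hγ'0 : 0 ≤ γ' := by linarith
  refine ⟨ε / 2 / (K * (‖H‖ + 1)), by positivity, ?_⟩
  intro x hx hx0
  have hinit : (K : ℝ) * ‖H (x 0 - xs)‖ ≤ ε / 2 := by
    have h1 : ‖H (x 0 - xs)‖ ≤ (‖H‖ + 1) * ‖x 0 - xs‖ :=
      H.le_of_opNorm_le (by linarith) _
    rw [le_div_iff₀ (by positivity)] at hx0
    have := mul_le_mul_of_nonneg_left h1 hK0.le
    linarith
  have inv : ∀ t, (K : ℝ) * ‖H (x t - xs)‖ ≤ γ' ^ t * (ε / 2) := by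
    intro t
    induction t with
    | zero => simpa using hinit
    | succ t ih =>
      have hp : γ' ^ t * (ε / 2) ≤ 1 * (ε / 2) :=
        mul_le_mul_of_nonneg_right (pow_le_one₀ hγ'0 hγ'1.le) (by positivity)
      have h1 := step (x t) (x (t + 1)) (by linarith [hb (x t - xs)]) (hx t)
      have h2 := mul_le_mul_of_nonneg_left h1 hK0.le
      have h3 := mul_le_mul_of_nonneg_left ih hγ'0
      rw [pow_succ]
      linarith
  refine ⟨?_, ?_⟩
  · rw [tendsto_iff_norm_sub_tendsto_zero]
    refine squeeze_zero (fun _ => norm_nonneg _) (fun t => (hb _).trans (inv t)) ?_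
    simpa using (tendsto_pow_atTop_nhds_zero_of_lt_one hγ'0 hγ'1).mul_const (ε / 2)
  · intro t
    have hp : γ' ^ t * (ε / 2) ≤ 1 * (ε / 2) :=
      mul_le_mul_of_nonneg_right (pow_le_one₀ hγ'0 hγ'1.le) (by positivity)
    exact step (x t) (x (t + 1)) (by linarith [hb (x t - xs), inv t]) (hx t)
end

section
/- Let F : ℝᵖ → ℝ be twice continuously differentiable, let x* ∈ ℝᵖ satisfy ∇F(x*) = 0 with ∇²F(x*) positive definite, let 0 ≤ γ < 1, and let (γ_t) be a sequence with 0 ≤ γ_t ≤ γ and γ_t → 0. Let (x^t) satisfy x^{t+1} = x^t − v^t with ‖∇²F(x^t)v^t − ∇F(x^t)‖ ≤ γ_t‖∇F(x^t)‖ for all t. Then there exists δ > 0 such that whenever ‖x⁰ − x*‖ ≤ δ, the sequence (x^t) converges to x* superlinearly: x^t → x* and for every ρ > 0 there exists T such that ‖∇²F(x*)(x^{t+1} − x*)‖ ≤ ρ‖∇²F(x*)(x^t − x*)‖ for all t ≥ T. -/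
open RealInnerProductSpace Filter

theorem newton_one_step {E : Type*} [NormedAddCommGroup E] [NormedSpace ℝ E]
    (G : E → E) (xs : E) (hG : ContDiff ℝ 1 G) (h0 : G xs = 0) (K : ℝ) (hK : 0 < K)
    (hA : ∀ y, ‖y‖ ≤ K * ‖fderiv ℝ G xs y‖) (ε : ℝ) (hε : 0 < ε) :
    ∃ r > (0 : ℝ), ∀ x y : E, ∀ g : ℝ, 0 ≤ g → g ≤ 1 → ‖x - xs‖ ≤ r →
      ‖fderiv ℝ G x (x - y) - G x‖ ≤ g * ‖G x‖ →
      ‖fderiv ℝ G xs (y - xs)‖ ≤ (g + ε) * ‖fderiv ℝ G xs (x - xs)‖ := by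
  set A := fderiv ℝ G xs with hAdef
  obtain ⟨κ, hκ0, hκ1, hκ⟩ : ∃ κ : ℝ, 0 < κ ∧ κ < 1 ∧ κ * (4 + ε) = ε := by
    refine ⟨ε / (4 + ε), by positivity, ?_, by field_simp⟩
    rw [div_lt_one (by positivity)]; linarith
  set η := κ / K with hη
  have hη0 : 0 < η := by positivity
  have hηK : η * K = κ := by rw [hη]; field_simp
  have hc : Continuous (fderiv ℝ G) := hG.continuous_fderiv (by norm_num)
  have hd : HasFDerivAt G A xs := (hG.differentiable (by norm_num) xs).hasFDerivAt
  have e1 : ∀ᶠ x in nhds xs, ‖fderiv ℝ G x - A‖ < η := by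
    have := Metric.tendsto_nhds.1 (hc.tendsto xs) η hη0
    simpa [dist_eq_norm] using this
  have e2 : ∀ᶠ x in nhds xs, ‖G x - G xs - A (x - xs)‖ ≤ η * ‖x - xs‖ :=
    hd.isLittleO.def hη0
  obtain ⟨r, hr, hball⟩ := Metric.eventually_nhds_iff.1 (e1.and e2)
  refine ⟨r / 2, by positivity, fun x y g hg0 hg1 hx hres => ?_⟩
  obtain ⟨b1, b2⟩ := hball (y := x) (by rw [dist_eq_norm]; linarith)
  rw [h0, sub_zero] at b2
  have c1 : ∀ z, ‖(fderiv ℝ G x - A) z‖ ≤ κ * ‖A z‖ := fun z => by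
    calc _ ≤ ‖fderiv ℝ G x - A‖ * ‖z‖ := ContinuousLinearMap.le_opNorm _ _
      _ ≤ η * (K * ‖A z‖) := mul_le_mul b1.le (hA z) (norm_nonneg _) hη0.le
      _ = κ * ‖A z‖ := by rw [← hηK]; ring
  have c2 : ‖G x - A (x - xs)‖ ≤ κ * ‖A (x - xs)‖ := by
    calc _ ≤ η * ‖x - xs‖ := b2
      _ ≤ η * (K * ‖A (x - xs)‖) := mul_le_mul_of_nonneg_left (hA _) hη0.le
      _ = _ := by rw [← hηK]; ring
  have c3 : ‖G x‖ ≤ (1 + κ) * ‖A (x - xs)‖ := by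
    have := norm_le_norm_add_norm_sub' (G x) (A (x - xs))
    linarith
  have key : A (y - xs) = (fderiv ℝ G x - A) (x - xs) - (G x - A (x - xs))
      - (fderiv ℝ G x (x - y) - G x) - (fderiv ℝ G x - A) (y - xs) := by
    simp only [ContinuousLinearMap.sub_apply, map_sub]; abel
  have c4 : ‖A (y - xs)‖ ≤ ‖(fderiv ℝ G x - A) (x - xs)‖ + ‖G x - A (x - xs)‖
      + ‖fderiv ℝ G x (x - y) - G x‖ + ‖(fderiv ℝ G x - A) (y - xs)‖ := by
    conv_lhs => rw [key]
    refine (norm_sub_le _ _).trans ?_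
    gcongr
    refine (norm_sub_le _ _).trans ?_
    gcongr
    exact norm_sub_le _ _
  have c5 := c1 (x - xs)
  have c6 := c1 (y - xs)
  have c7 : g * ‖G x‖ ≤ g * ((1 + κ) * ‖A (x - xs)‖) := mul_le_mul_of_nonneg_left c3 hg0
  have hn := norm_nonneg (A (x - xs))
  have c8 : (1 - κ) * ‖A (y - xs)‖ ≤ (1 - κ) * ((g + ε) * ‖A (x - xs)‖) := by
    have h1 : (1 - κ) * ‖A (y - xs)‖ ≤ (2 * κ + g * (1 + κ)) * ‖A (x - xs)‖ := by linarith
    have h2 : 2 * κ + g * (1 + κ) ≤ (1 - κ) * (g + ε) := by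
      have : g * κ ≤ κ := by nlinarith
      linarith
    have h3 := mul_le_mul_of_nonneg_right h2 hn
    linarith
  exact le_of_mul_le_mul_left c8 (by linarith)

/-- superlinear convergence of inexact Newton with vanishing forcing terms.
If `F` is twice continuously differentiable, `∇F(x*) = 0` with positive definite Hessian
at `x*`, `0 ≤ γ_t ≤ γ < 1` and `γ_t → 0`, then there is `δ > 0` such that any iterates
`x^{t+1} = x^t - v^t` with `‖∇²F(x^t)v^t - ∇F(x^t)‖ ≤ γ_t‖∇F(x^t)‖`, started with
`‖x⁰ - x*‖ ≤ δ`, converge to `x*` superlinearly. -/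
theorem inexact_newton_superlinear_convergence {p : ℕ}
    (F : EuclideanSpace ℝ (Fin p) → ℝ) (xs : EuclideanSpace ℝ (Fin p)) (γ : ℝ)
    (hF : ContDiff ℝ 2 F) (hcrit : gradient F xs = 0)
    (hpos : ∀ y : EuclideanSpace ℝ (Fin p), y ≠ 0 →
      0 < ⟪y, fderiv ℝ (gradient F) xs y⟫)
    (hγ0 : 0 ≤ γ) (hγ1 : γ < 1)
    (γseq : ℕ → ℝ) (hγseq : ∀ t, 0 ≤ γseq t ∧ γseq t ≤ γ)
    (hγlim : Tendsto γseq atTop (nhds 0)) :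
    ∃ δ > (0 : ℝ), ∀ x : ℕ → EuclideanSpace ℝ (Fin p),
      (∀ t, ‖fderiv ℝ (gradient F) (x t) (x t - x (t + 1)) - gradient F (x t)‖ ≤
        γseq t * ‖gradient F (x t)‖) →
      ‖x 0 - xs‖ ≤ δ →
      Tendsto x atTop (nhds xs) ∧
        ∀ ρ > (0 : ℝ), ∃ T : ℕ, ∀ t ≥ T,
          ‖fderiv ℝ (gradient F) xs (x (t + 1) - xs)‖ ≤
            ρ * ‖fderiv ℝ (gradient F) xs (x t - xs)‖ := by
  have hG : ContDiff ℝ 1 (gradient F) := by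
    have h1 : ContDiff ℝ 1 (fderiv ℝ F) := hF.fderiv_right (by norm_num)
    exact (InnerProductSpace.toDual ℝ (EuclideanSpace ℝ (Fin p))).symm.contDiff.comp h1
  set A := fderiv ℝ (gradient F) xs with hAdef
  have hker : LinearMap.ker (A : EuclideanSpace ℝ (Fin p) →ₗ[ℝ] EuclideanSpace ℝ (Fin p)) = ⊥ := by
    rw [LinearMap.ker_eq_bot']
    intro y hy
    by_contra hne
    have h := hpos y hne
    have hy' : A y = 0 := hy
    rw [hy', inner_zero_right] at h
    exact lt_irrefl _ h
  obtain ⟨K, hK, hanti⟩ := LinearMap.exists_antilipschitzWith _ hker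
  have hK0 : (0 : ℝ) < K := by exact_mod_cast hK
  have hA : ∀ y, ‖y‖ ≤ (K : ℝ) * ‖A y‖ := fun y => by
    have := hanti.le_mul_dist y 0
    simpa [dist_eq_norm] using this
  have step := newton_one_step (gradient F) xs hG hcrit K hK0 hA
  obtain ⟨r, hr, hstep⟩ := step ((1 - γ) / 2) (by linarith)
  set q := (1 + γ) / 2 with hq
  have hq0 : 0 ≤ q := by linarith
  have hq1 : q < 1 := by linarith
  refine ⟨r / (K * (‖A‖ + 1)), by positivity, fun x hx hx0 => ?_⟩
  have hsmall : ∀ t, ‖A (x t - xs)‖ ≤ q ^ t * (r / K) → ‖x t - xs‖ ≤ q ^ t * r := fun t ht => by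
    calc _ ≤ (K : ℝ) * ‖A (x t - xs)‖ := hA _
      _ ≤ K * (q ^ t * (r / K)) := mul_le_mul_of_nonneg_left ht hK0.le
      _ = q ^ t * r := by field_simp
  have hind : ∀ t, ‖A (x t - xs)‖ ≤ q ^ t * (r / K) := by
    intro t
    induction t with
    | zero =>
      rw [pow_zero, one_mul]
      calc _ ≤ ‖A‖ * ‖x 0 - xs‖ := A.le_opNorm _
        _ ≤ (‖A‖ + 1) * (r / (K * (‖A‖ + 1))) :=
          mul_le_mul (by linarith) hx0 (norm_nonneg _) (by positivity)
        _ = r / K := by field_simp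
    | succ t ih =>
      have h1 : ‖x t - xs‖ ≤ r :=
        (hsmall t ih).trans (mul_le_of_le_one_left hr.le (pow_le_one₀ hq0 hq1.le))
      have h2 := hstep (x t) (x (t + 1)) (γseq t) (hγseq t).1 ((hγseq t).2.trans hγ1.le) h1 (hx t)
      calc _ ≤ (γseq t + (1 - γ) / 2) * ‖A (x t - xs)‖ := h2
        _ ≤ q * (q ^ t * (r / K)) :=
          mul_le_mul (by linarith [(hγseq t).2]) ih (norm_nonneg _) hq0
        _ = _ := by ring
  have hlim : Tendsto x atTop (nhds xs) := by
    rw [tendsto_iff_norm_sub_tendsto_zero]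
    have h := (tendsto_pow_atTop_nhds_zero_of_lt_one hq0 hq1).mul_const r
    rw [zero_mul] at h
    exact squeeze_zero (fun _ => norm_nonneg _) (fun t => hsmall t (hind t)) h
  refine ⟨hlim, fun ρ hρ => ?_⟩
  obtain ⟨s, hs, hst⟩ := step (ρ / 2) (by linarith)
  have e1 : ∀ᶠ t in atTop, ‖x t - xs‖ < s :=
    (tendsto_iff_norm_sub_tendsto_zero.1 hlim).eventually_lt_const hs
  have e2 : ∀ᶠ t in atTop, γseq t < ρ / 2 := hγlim.eventually_lt_const (by linarith)
  obtain ⟨T, hT⟩ := eventually_atTop.1 (e1.and e2)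
  refine ⟨T, fun t ht => ?_⟩
  obtain ⟨h1, h2⟩ := hT t ht
  refine (hst (x t) (x (t + 1)) (γseq t) (hγseq t).1 ((hγseq t).2.trans hγ1.le) h1.le (hx t)).trans ?_
  exact mul_le_mul_of_nonneg_right (by linarith) (norm_nonneg _)
end

section
/- Let F : ℝᵖ → ℝ be twice continuously differentiable, let x* ∈ ℝᵖ satisfy ∇F(x*) = 0 with ∇²F(x*) positive definite, and suppose ∇²F is L-Lipschitz in a neighborhood of x*. Let 0 ≤ γ < 1, c > 0, and let (x^t) satisfy x^{t+1} = x^t − v^t with ‖∇²F(x^t)v^t − ∇F(x^t)‖ ≤ γ_t‖∇F(x^t)‖, where 0 ≤ γ_t ≤ min(γ, c‖∇F(x^t)‖) for all t. Then there exist δ > 0 and C' > 0 such that whenever ‖x⁰ − x*‖ ≤ δ, the sequence (x^t) converges to x* quadratically: x^t → x* and ‖∇²F(x*)(x^{t+1} − x*)‖ ≤ C'‖∇²F(x*)(x^t − x*)‖² for all t. -/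
open RealInnerProductSpace Filter

/-- quadratic convergence of inexact Newton with forcing terms of order
`O(‖∇F(x^t)‖)`. If `F` is twice continuously differentiable, `∇F(x*) = 0` with positive
definite Hessian at `x*`, the Hessian is `L`-Lipschitz on a ball of radius `ρ₀ > 0`
around `x*`, and the forcing terms satisfy `0 ≤ γ_t ≤ min(γ, c‖∇F(x^t)‖)` with
`0 ≤ γ < 1`, `c > 0`, then there exist `δ > 0` and `C' > 0` such that any such iterates
started with `‖x⁰ - x*‖ ≤ δ` converge to `x*` quadratically. -/
theorem inexact_newton_quadratic_convergence {p : ℕ}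
    (F : EuclideanSpace ℝ (Fin p) → ℝ) (xs : EuclideanSpace ℝ (Fin p))
    (γ c L ρ₀ : ℝ)
    (hF : ContDiff ℝ 2 F) (hcrit : gradient F xs = 0)
    (hpos : ∀ y : EuclideanSpace ℝ (Fin p), y ≠ 0 →
      0 < ⟪y, fderiv ℝ (gradient F) xs y⟫)
    (hρ₀ : 0 < ρ₀)
    (hLip : ∀ y ∈ Metric.ball xs ρ₀, ∀ z ∈ Metric.ball xs ρ₀,
      ‖fderiv ℝ (gradient F) y - fderiv ℝ (gradient F) z‖ ≤ L * ‖y - z‖)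
    (hγ0 : 0 ≤ γ) (hγ1 : γ < 1) (hc : 0 < c) :
    ∃ δ > (0 : ℝ), ∃ C' > (0 : ℝ),
      ∀ γseq : ℕ → ℝ, ∀ x : ℕ → EuclideanSpace ℝ (Fin p),
        (∀ t, 0 ≤ γseq t ∧ γseq t ≤ γ ∧ γseq t ≤ c * ‖gradient F (x t)‖) →
        (∀ t, ‖fderiv ℝ (gradient F) (x t) (x t - x (t + 1)) - gradient F (x t)‖ ≤
          γseq t * ‖gradient F (x t)‖) →
        ‖x 0 - xs‖ ≤ δ →
        Tendsto x atTop (nhds xs) ∧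
          ∀ t, ‖fderiv ℝ (gradient F) xs (x (t + 1) - xs)‖ ≤
            C' * ‖fderiv ℝ (gradient F) xs (x t - xs)‖ ^ 2 := by
  have hGd : Differentiable ℝ (gradient F) := by
    have h1 : ContDiff ℝ 1 (fderiv ℝ F) := hF.fderiv_right (by norm_num)
    have h2 : Differentiable ℝ (fderiv ℝ F) := h1.differentiable (by norm_num)
    have h3 := (InnerProductSpace.toDual ℝ
      (EuclideanSpace ℝ (Fin p))).symm.toContinuousLinearEquiv.differentiable
    exact h3.comp h2
  set G := gradient F with hG
  set A := fderiv ℝ G xs with hA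
  obtain ⟨m, hm, hAm⟩ : ∃ m > (0 : ℝ), ∀ y, m * ‖y‖ ≤ ‖A y‖ := by
    have hker : LinearMap.ker (A : EuclideanSpace ℝ (Fin p) →ₗ[ℝ] EuclideanSpace ℝ (Fin p)) = ⊥ := by
      rw [LinearMap.ker_eq_bot']
      intro y hy
      by_contra hne
      have h1 := hpos y hne
      have h2 : A y = 0 := hy
      rw [h2, inner_zero_right] at h1
      exact lt_irrefl _ h1
    obtain ⟨K, hK, hKA⟩ := LinearMap.exists_antilipschitzWith _ hker
    have hK' : (0 : ℝ) < K := hK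
    refine ⟨(K : ℝ)⁻¹, inv_pos.mpr hK', fun y => ?_⟩
    have h1 := hKA.le_mul_dist y 0
    simp only [dist_zero_right, map_zero] at h1
    rw [inv_mul_le_iff₀ hK']
    exact h1
  obtain ⟨L', hL', hLL⟩ : ∃ L' > (0 : ℝ), L ≤ L' :=
    ⟨max L 1, lt_max_of_lt_right one_pos, le_max_left _ _⟩
  have hM : 0 ≤ ‖A‖ := norm_nonneg _
  set K : ℝ := ‖A‖ + 2 * L' with hK
  have hKpos : 0 < K := by positivity
  set D : ℝ := L' + c * K ^ 2 with hD
  have hDpos : 0 < D := by positivity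
  -- the one-step estimate
  have step : ∀ (x x' : EuclideanSpace ℝ (Fin p)) (g : ℝ), ‖x - xs‖ < ρ₀ → ‖x - xs‖ ≤ 1 →
      L' * ‖x - xs‖ ≤ m / 2 → g ≤ c * ‖G x‖ →
      ‖fderiv ℝ G x (x - x') - G x‖ ≤ g * ‖G x‖ →
      ‖A (x' - xs)‖ ≤ 2 * D * ‖x - xs‖ ^ 2 := by
    intro x x' g hxρ hx1 hxm hg hres
    have hxb : x ∈ Metric.ball xs ρ₀ := by rwa [mem_ball_iff_norm]
    have hsb : xs ∈ Metric.ball xs ρ₀ := Metric.mem_ball_self hρ₀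
    have hHA : ‖fderiv ℝ G x - A‖ ≤ L' * ‖x - xs‖ :=
      (hLip x hxb xs hsb).trans (by gcongr)
    have htay : ‖G x - fderiv ℝ G x (x - xs)‖ ≤ L' * ‖x - xs‖ ^ 2 := by
      have h := (convex_segment xs x).norm_image_sub_le_of_norm_hasFDerivWithin_le' (𝕜 := ℝ)
        (f := G) (f' := fderiv ℝ G) (φ := fderiv ℝ G x) (C := L' * ‖x - xs‖)
        (fun y _ => (hGd y).hasFDerivAt.hasFDerivWithinAt)
        (fun y hy => by
          have hyb : y ∈ Metric.ball xs ρ₀ := (convex_ball xs ρ₀).segment_subset hsb hxb hy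
          refine (hLip y hyb x hxb).trans ?_
          have : ‖y - x‖ ≤ ‖x - xs‖ := by
            have := norm_sub_le_of_mem_segment (segment_symm ℝ xs x ▸ hy)
            rwa [norm_sub_rev xs x] at this
          gcongr)
        (left_mem_segment ℝ xs x) (right_mem_segment ℝ xs x)
      rw [hcrit, sub_zero] at h
      linarith
    have hGx : ‖G x‖ ≤ K * ‖x - xs‖ := by
      have h1 : ‖A (x - xs)‖ ≤ ‖A‖ * ‖x - xs‖ := A.le_opNorm _
      have h2 : ‖(fderiv ℝ G x - A) (x - xs)‖ ≤ L' * ‖x - xs‖ * ‖x - xs‖ :=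
        (ContinuousLinearMap.le_opNorm _ _).trans (by gcongr)
      have h3 : G x = (G x - fderiv ℝ G x (x - xs)) + (fderiv ℝ G x - A) (x - xs) + A (x - xs) := by
        simp only [ContinuousLinearMap.sub_apply]; abel
      have h4 := norm_add₃_le (a := G x - fderiv ℝ G x (x - xs))
        (b := (fderiv ℝ G x - A) (x - xs)) (c := A (x - xs))
      rw [← h3] at h4
      have h5 : L' * (‖x - xs‖ * ‖x - xs‖) ≤ L' * (1 * ‖x - xs‖) := by gcongr
      rw [hK]
      nlinarith
    have hHe : ‖fderiv ℝ G x (x' - xs)‖ ≤ D * ‖x - xs‖ ^ 2 := by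
      have h3 : fderiv ℝ G x (x' - xs) =
          -(fderiv ℝ G x (x - x') - G x) - (G x - fderiv ℝ G x (x - xs)) := by
        simp only [map_sub]; abel
      have h4 : g * ‖G x‖ ≤ c * (K * ‖x - xs‖) * (K * ‖x - xs‖) := by
        calc g * ‖G x‖ ≤ c * ‖G x‖ * ‖G x‖ := by gcongr
          _ ≤ _ := by gcongr
      rw [h3]
      refine (norm_sub_le _ _).trans ?_
      rw [norm_neg, hD]
      nlinarith
    have h2 : ‖(fderiv ℝ G x - A) (x' - xs)‖ ≤ L' * ‖x - xs‖ * ‖x' - xs‖ :=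
      (ContinuousLinearMap.le_opNorm _ _).trans (by gcongr)
    have h3 : A (x' - xs) = fderiv ℝ G x (x' - xs) - (fderiv ℝ G x - A) (x' - xs) := by
      simp only [ContinuousLinearMap.sub_apply]; abel
    have h4 := norm_sub_le (fderiv ℝ G x (x' - xs)) ((fderiv ℝ G x - A) (x' - xs))
    rw [← h3] at h4
    have h5 : L' * ‖x - xs‖ * ‖x' - xs‖ ≤ m / 2 * ‖x' - xs‖ := by gcongr
    have h6 := hAm (x' - xs)
    linarith
  obtain ⟨δ, hδ, hδρ, hδ1, hδm, hδD⟩ : ∃ δ > (0 : ℝ), δ < ρ₀ ∧ δ ≤ 1 ∧ L' * δ ≤ m / 2 ∧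
      2 * D * δ ≤ m / 2 := by
    refine ⟨min (min (ρ₀ / 2) 1) (min (m / 2 / L') (m / 2 / (2 * D))), by positivity, ?_, ?_, ?_, ?_⟩
    · exact lt_of_le_of_lt ((min_le_left _ _).trans (min_le_left _ _)) (by linarith)
    · exact (min_le_left _ _).trans (min_le_right _ _)
    · rw [mul_comm, ← le_div_iff₀ hL']
      exact (min_le_right _ _).trans (min_le_left _ _)
    · rw [mul_comm, ← le_div_iff₀ (by positivity)]
      exact (min_le_right _ _).trans (min_le_right _ _)
  refine ⟨δ, hδ, 2 * D / m ^ 2, by positivity, ?_⟩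
  intro γseq x hγs hres hx0
  have hstep : ∀ t, ‖x t - xs‖ ≤ δ → ‖A (x (t + 1) - xs)‖ ≤ 2 * D * ‖x t - xs‖ ^ 2 := by
    intro t ht
    exact step (x t) (x (t + 1)) (γseq t) (ht.trans_lt hδρ) (ht.trans hδ1)
      (le_trans (by gcongr) hδm) (hγs t).2.2 (hres t)
  have hhalf : ∀ t, ‖x t - xs‖ ≤ δ → ‖x (t + 1) - xs‖ ≤ 1 / 2 * ‖x t - xs‖ := by
    intro t ht
    have h1 := hstep t ht
    have h2 := hAm (x (t + 1) - xs)
    have h3 : 2 * D * ‖x t - xs‖ * ‖x t - xs‖ ≤ m / 2 * ‖x t - xs‖ := by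
      have : 2 * D * ‖x t - xs‖ ≤ m / 2 := le_trans (by gcongr) hδD
      gcongr
    have h4 : m * ‖x (t + 1) - xs‖ ≤ m * (1 / 2 * ‖x t - xs‖) := by nlinarith
    exact le_of_mul_le_mul_left h4 hm
  have hbd : ∀ t, ‖x t - xs‖ ≤ (1 / 2) ^ t * δ ∧ ‖x t - xs‖ ≤ δ := by
    intro t
    induction t with
    | zero => simpa using hx0
    | succ t ih =>
      have h1 := hhalf t ih.2
      have h0 := norm_nonneg (x t - xs)
      refine ⟨?_, by linarith [ih.2]⟩
      rw [pow_succ]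
      linarith [ih.1]
  refine ⟨?_, fun t => ?_⟩
  · rw [tendsto_iff_norm_sub_tendsto_zero]
    refine squeeze_zero (fun t => norm_nonneg _) (fun t => (hbd t).1) ?_
    have := (tendsto_pow_atTop_nhds_zero_of_lt_one (r := (1 / 2 : ℝ)) (by norm_num)
      (by norm_num)).mul_const δ
    simpa using this
  · refine (hstep t (hbd t).2).trans ?_
    have h1 := hAm (x t - xs)
    have h2 : (m * ‖x t - xs‖) ^ 2 ≤ ‖A (x t - xs)‖ ^ 2 := by gcongr
    rw [div_mul_eq_mul_div, le_div_iff₀ (by positivity)]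
    have h3 : 2 * D * (m * ‖x t - xs‖) ^ 2 ≤ 2 * D * ‖A (x t - xs)‖ ^ 2 := by gcongr
    linarith
end

section
/- Let A₁, …, Aₙ be real symmetric positive semidefinite p×p matrices with ‖Aᵢ‖ ≤ K for all i, and let Ā = (1/n)Σᵢ Aᵢ. Let c > 0, 0 < ε < 1, 0 < δ < 1, and let s be a positive integer with s ≥ 16K² log(2p/δ)/(c²ε²). Draw indices j₁, …, j_s independently and uniformly at random from {1, …, n} and set H = (1/s)Σ_{k=1}^{s} A_{j_k}. Then with probability at least 1 − δ, ‖H − Ā‖ ≤ εc. -/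
open Matrix

lemma scalar_exp_ineq (d : ℝ) : Real.exp d - 1 - d ≤ d ^ 2 / 2 * (Real.exp d + 1) := by
  suffices h : Real.exp d * (1 - d ^ 2 / 2) ≤ 1 + d + d ^ 2 / 2 by linarith
  rcases le_or_gt 2 d with hd | hd
  · have h1 := Real.exp_pos d
    have : Real.exp d * (1 - d ^ 2 / 2) ≤ 0 :=
      mul_nonpos_of_nonneg_of_nonpos h1.le (by nlinarith)
    nlinarith
  · have h1 : 1 - d / 2 ≤ Real.exp (-d / 2) := by
      have := Real.add_one_le_exp (-d / 2); linarith
    have h2 : (1 - d / 2) ^ 2 ≤ Real.exp (-d) := by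
      calc (1 - d / 2) ^ 2 ≤ Real.exp (-d / 2) ^ 2 := by
            apply pow_le_pow_left₀ _ h1; linarith
        _ = Real.exp (-d) := by rw [← Real.exp_nat_mul]; congr 1; push_cast; ring
    have h3 : (0 : ℝ) ≤ 1 + d + d ^ 2 / 2 := by nlinarith [sq_nonneg (1 + d)]
    have h4 : 1 - d ^ 2 / 2 ≤ Real.exp (-d) * (1 + d + d ^ 2 / 2) := by
      have h5 := mul_le_mul_of_nonneg_right h2 h3
      have h6 : 0 ≤ d ^ 2 * (1 / 4 - d / 4 + d ^ 2 / 8) :=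
        mul_nonneg (sq_nonneg d) (by nlinarith [sq_nonneg (d - 1)])
      nlinarith
    have h7 := mul_le_mul_of_nonneg_left h4 (Real.exp_pos d).le
    rw [← mul_assoc, ← Real.exp_add] at h7
    simpa using h7

lemma scalar_exp_ineq2 (l m : ℝ) : Real.exp l - Real.exp m ≤
    (l - m) * Real.exp m + (l - m) ^ 2 / 2 * (Real.exp l + Real.exp m) := by
  have h := mul_le_mul_of_nonneg_right (scalar_exp_ineq (l - m)) (Real.exp_pos m).le
  have e : Real.exp l = Real.exp (l - m) * Real.exp m := by rw [← Real.exp_add]; simp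
  rw [e]; nlinarith

abbrev EV (p : ℕ) := EuclideanSpace ℝ (Fin p)

/-- symmetric operators -/
def SymOp {p : ℕ} (T : EV p →L[ℝ] EV p) : Prop := ∀ x y, inner ℝ (T x) y = inner ℝ x (T y)

lemma exists_eig {p : ℕ} (T : EV p →L[ℝ] EV p) :
    ∃ (b : OrthonormalBasis (Fin p) ℝ (EV p)) (l : Fin p → ℝ), SymOp T → ∀ i, T (b i) = l i • b i := by
  by_cases h : SymOp T
  · have hs : (T : EV p →ₗ[ℝ] EV p).IsSymmetric := fun x y => h x y
    refine ⟨hs.eigenvectorBasis (by simp), hs.eigenvalues (by simp), fun _ i => ?_⟩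
    exact hs.apply_eigenvectorBasis (by simp) i
  · exact ⟨EuclideanSpace.basisFun _ _, 0, fun h' => absurd h' h⟩

noncomputable def eb {p : ℕ} (T : EV p →L[ℝ] EV p) : OrthonormalBasis (Fin p) ℝ (EV p) :=
  (exists_eig T).choose
noncomputable def el {p : ℕ} (T : EV p →L[ℝ] EV p) : Fin p → ℝ :=
  (exists_eig T).choose_spec.choose
lemma eb_spec {p : ℕ} {T : EV p →L[ℝ] EV p} (h : SymOp T) (i : Fin p) : T (eb T i) = el T i • eb T i :=
  (exists_eig T).choose_spec.choose_spec h i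

/-- trace of the exponential -/
noncomputable def trexp {p : ℕ} (T : EV p →L[ℝ] EV p) : ℝ := ∑ i, Real.exp (el T i)
/-- trace of `Y exp T` -/
noncomputable def trmul {p : ℕ} (T Y : EV p →L[ℝ] EV p) : ℝ :=
  ∑ i, Real.exp (el T i) * inner ℝ (eb T i) (Y (eb T i))

lemma trexp_nonneg {p : ℕ} (T : EV p →L[ℝ] EV p) : 0 ≤ trexp T :=
  Finset.sum_nonneg fun _ _ => (Real.exp_pos _).le

lemma eig_coord {p : ℕ} {T : EV p →L[ℝ] EV p} (h : SymOp T) (x : EV p) (i : Fin p) :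
    inner ℝ (eb T i) (T x) = el T i * inner ℝ (eb T i) x := by
  rw [← h, eb_spec h, real_inner_smul_left]

lemma parseval {p : ℕ} (b : OrthonormalBasis (Fin p) ℝ (EV p)) (x : EV p) :
    ∑ i, (inner ℝ (b i) x) ^ 2 = ‖x‖ ^ 2 := by
  have := b.sum_sq_norm_inner_right x
  simpa using this

lemma parseval2 {p : ℕ} (b : OrthonormalBasis (Fin p) ℝ (EV p)) (x y : EV p) :
    ∑ i, inner ℝ (b i) x * inner ℝ (b i) y = inner ℝ x y := by
  rw [← b.sum_inner_mul_inner x y]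
  exact Finset.sum_congr rfl fun i _ => by rw [real_inner_comm]

lemma norm_le_of_eig {p : ℕ} {T : EV p →L[ℝ] EV p} (h : SymOp T) {r : ℝ} (hr : 0 ≤ r)
    (hl : ∀ i, |el T i| ≤ r) : ‖T‖ ≤ r := by
  refine T.opNorm_le_bound hr fun x => ?_
  apply le_of_sq_le_sq _ (by positivity)
  rw [mul_pow, ← parseval (eb T) (T x), ← parseval (eb T) x, Finset.mul_sum]
  refine Finset.sum_le_sum fun i _ => ?_
  rw [eig_coord h, mul_pow]
  exact mul_le_mul_of_nonneg_right (sq_le_sq' (abs_le.1 (hl i)).1 (abs_le.1 (hl i)).2) (sq_nonneg _)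

lemma el_eq {p : ℕ} {T : EV p →L[ℝ] EV p} (h : SymOp T) (i : Fin p) :
    el T i = inner ℝ (eb T i) (T (eb T i)) := by
  rw [eb_spec h, real_inner_smul_right]; simp

lemma norm_le_of_quad {p : ℕ} {T : EV p →L[ℝ] EV p} (h : SymOp T) {r : ℝ} (hr : 0 ≤ r)
    (hl : ∀ x, ‖x‖ = 1 → |inner ℝ x (T x)| ≤ r) : ‖T‖ ≤ r :=
  norm_le_of_eig h hr fun i => by rw [el_eq h]; exact hl _ (by simp)

lemma exp_quad_le {p : ℕ} {T : EV p →L[ℝ] EV p} (h : SymOp T) {r : ℝ} {x : EV p} (hx : ‖x‖ = 1)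
    (hr : r < inner ℝ x (T x)) : Real.exp r ≤ trexp T := by
  have : ∃ i, r < el T i := by
    by_contra! hc
    have : inner ℝ x (T x) ≤ r := by
      rw [← parseval2 (eb T)]
      calc _ ≤ ∑ i, r * (inner ℝ (eb T i) x) ^ 2 := Finset.sum_le_sum fun i _ => by
            rw [eig_coord h]
            nlinarith [mul_le_mul_of_nonneg_right (hc i) (sq_nonneg (inner ℝ (eb T i) x))]
        _ = r := by rw [← Finset.mul_sum, parseval, hx]; simp
    linarith
  obtain ⟨i, hi⟩ := this
  refine (Real.exp_le_exp.2 hi.le).trans ?_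
  exact Finset.single_le_sum (f := fun i => Real.exp (el T i)) (fun _ _ => (Real.exp_pos _).le)
    (Finset.mem_univ i)

lemma exp_norm_le {p : ℕ} {T : EV p →L[ℝ] EV p} (h : SymOp T) (h' : SymOp (-T)) {r : ℝ} (hr : 0 ≤ r)
    (hT : r < ‖T‖) : Real.exp r ≤ trexp T + trexp (-T) := by
  by_contra! hc
  have h1 := trexp_nonneg T
  have h2 := trexp_nonneg (-T)
  apply not_le.2 hT
  refine norm_le_of_quad h hr fun x hx => abs_le.2 ⟨?_, ?_⟩
  · by_contra! hh
    have := exp_quad_le h' (r := r) hx (by simp; linarith)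
    linarith
  · by_contra! hh
    have := exp_quad_le h (r := r) hx hh
    linarith

lemma key_ineq {p : ℕ} {M N : EV p →L[ℝ] EV p} (hM : SymOp M) (hN : SymOp N) {r : ℝ}
    (hr : ‖M - N‖ ≤ r) :
    trexp M - trexp N ≤ trmul N (M - N) + r ^ 2 / 2 * (trexp M + trexp N) := by
  set w : Fin p → Fin p → ℝ := fun i j => (inner ℝ (eb M i) (eb N j)) ^ 2 with hw
  have hw0 : ∀ i j, 0 ≤ w i j := fun i j => sq_nonneg _
  have hwj : ∀ i, ∑ j, w i j = 1 := fun i => by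
    have := parseval (eb N) (eb M i)
    simp only [OrthonormalBasis.norm_eq_one, one_pow] at this
    rw [← this]
    exact Finset.sum_congr rfl fun j _ => by rw [hw, real_inner_comm]
  have hwi : ∀ j, ∑ i, w i j = 1 := fun j => by
    have := parseval (eb M) (eb N j)
    simpa using this
  have c1 : ∀ i j, inner ℝ (eb M i) ((M - N) (eb N j)) =
      (el M i - el N j) * inner ℝ (eb M i) (eb N j) := fun i j => by
    rw [_root_.sub_apply, inner_sub_right, eig_coord hM, eb_spec hN,
      real_inner_smul_right]; ring
  have c2 : ∀ i j, inner ℝ (eb N j) ((M - N) (eb M i)) =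
      (el M i - el N j) * inner ℝ (eb M i) (eb N j) := fun i j => by
    rw [_root_.sub_apply, inner_sub_right, eig_coord hN, eb_spec hM,
      real_inner_smul_right, real_inner_comm]; ring
  have nb : ∀ x : EV p, ‖x‖ = 1 → ‖(M - N) x‖ ^ 2 ≤ r ^ 2 := fun x hx => by
    have := (M - N).le_opNorm x
    rw [hx, mul_one] at this
    exact pow_le_pow_left₀ (norm_nonneg _) (this.trans hr) 2
  have q1 : ∀ j, ∑ i, (el M i - el N j) ^ 2 * w i j ≤ r ^ 2 := fun j => by
    refine le_trans (le_of_eq ?_) (nb (eb N j) (by simp))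
    rw [← parseval (eb M)]
    exact Finset.sum_congr rfl fun i _ => by rw [c1, mul_pow]
  have q2 : ∀ i, ∑ j, (el M i - el N j) ^ 2 * w i j ≤ r ^ 2 := fun i => by
    refine le_trans (le_of_eq ?_) (nb (eb M i) (by simp))
    rw [← parseval (eb N)]
    exact Finset.sum_congr rfl fun j _ => by rw [c2, mul_pow]
  have t1 : ∀ j, inner ℝ (eb N j) ((M - N) (eb N j)) = ∑ i, (el M i - el N j) * w i j := fun j => by
    rw [← parseval2 (eb M)]
    exact Finset.sum_congr rfl fun i _ => by rw [c1, hw]; ring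
  have e1 : trexp M = ∑ i, ∑ j, Real.exp (el M i) * w i j := by
    simp only [← Finset.mul_sum, hwj, mul_one]; rfl
  have e2 : trexp N = ∑ i, ∑ j, Real.exp (el N j) * w i j := by
    rw [Finset.sum_comm]
    simp only [← Finset.mul_sum, hwi, mul_one]; rfl
  have e3 : trmul N (M - N) = ∑ i, ∑ j, Real.exp (el N j) * ((el M i - el N j) * w i j) := by
    rw [Finset.sum_comm]
    simp only [← Finset.mul_sum, ← t1]; rfl
  have e4 : ∑ i, ∑ j, Real.exp (el M i) * ((el M i - el N j) ^ 2 * w i j) ≤ r ^ 2 * trexp M := by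
    simp only [← Finset.mul_sum]
    rw [trexp, Finset.mul_sum]
    refine Finset.sum_le_sum fun i _ => ?_
    rw [mul_comm (r ^ 2)]
    exact mul_le_mul_of_nonneg_left (q2 i) (Real.exp_pos _).le
  have e5 : ∑ i, ∑ j, Real.exp (el N j) * ((el M i - el N j) ^ 2 * w i j) ≤ r ^ 2 * trexp N := by
    rw [Finset.sum_comm]
    simp only [← Finset.mul_sum]
    rw [trexp, Finset.mul_sum]
    refine Finset.sum_le_sum fun i _ => ?_
    rw [mul_comm (r ^ 2)]
    exact mul_le_mul_of_nonneg_left (q1 i) (Real.exp_pos _).le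
  have main : trexp M - trexp N ≤ trmul N (M - N) +
      (1 / 2) * (∑ i, ∑ j, Real.exp (el M i) * ((el M i - el N j) ^ 2 * w i j)) +
      (1 / 2) * (∑ i, ∑ j, Real.exp (el N j) * ((el M i - el N j) ^ 2 * w i j)) := by
    rw [e1, e2, e3]
    simp only [Finset.mul_sum, ← Finset.sum_add_distrib, ← Finset.sum_sub_distrib]
    refine Finset.sum_le_sum fun i _ => Finset.sum_le_sum fun j _ => ?_
    have := mul_le_mul_of_nonneg_right (scalar_exp_ineq2 (el M i) (el N j)) (hw0 i j)
    linarith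
  linarith

lemma SymOp.add {p : ℕ} {S T : EV p →L[ℝ] EV p} (hS : SymOp S) (hT : SymOp T) : SymOp (S + T) :=
  fun x y => by simp [inner_add_left, inner_add_right, hS x y, hT x y]
lemma SymOp.smul {p : ℕ} {T : EV p →L[ℝ] EV p} (a : ℝ) (hT : SymOp T) : SymOp (a • T) :=
  fun x y => by simp [real_inner_smul_left, real_inner_smul_right, hT x y]
lemma SymOp.zero {p : ℕ} : SymOp (0 : EV p →L[ℝ] EV p) := fun x y => by simp
lemma SymOp.sum {p : ℕ} {ι : Type*} (s : Finset ι) {T : ι → EV p →L[ℝ] EV p} (hT : ∀ i, SymOp (T i)) :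
    SymOp (∑ i ∈ s, T i) := by
  classical
  induction s using Finset.induction_on with
  | empty => simpa using SymOp.zero
  | insert a s ha ih => rw [Finset.sum_insert ha]; exact (hT a).add ih

lemma trmul_sum {p n : ℕ} (T : EV p →L[ℝ] EV p) (Y : Fin n → EV p →L[ℝ] EV p) :
    ∑ i, trmul T (Y i) = trmul T (∑ i, Y i) := by
  unfold trmul
  rw [Finset.sum_comm]
  refine Finset.sum_congr rfl fun i _ => ?_
  rw [← Finset.mul_sum, _root_.sum_apply, inner_sum]

lemma step_bound {p n : ℕ} {S : EV p →L[ℝ] EV p} (hS : SymOp S) {Y : Fin n → EV p →L[ℝ] EV p}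
    (hY : ∀ i, SymOp (Y i)) (h0 : ∑ i, Y i = 0) {r : ℝ} (hr : ∀ i, ‖Y i‖ ≤ r) (hr1 : r ^ 2 ≤ 1) :
    ∑ i, trexp (S + Y i) ≤ n * Real.exp (3 * r ^ 2) * trexp S := by
  set a := r ^ 2 / 2 with ha
  have ha0 : 0 ≤ a := by positivity
  have h1 : ∑ i, (trexp (S + Y i) - trexp S) ≤
      ∑ i, (trmul S (Y i) + a * (trexp (S + Y i) + trexp S)) := by
    refine Finset.sum_le_sum fun i _ => ?_
    have := key_ineq (hS.add (hY i)) hS (r := r) (by simpa using hr i)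
    simpa using this
  rw [Finset.sum_add_distrib, trmul_sum, h0, ← Finset.mul_sum, Finset.sum_add_distrib,
    Finset.sum_sub_distrib] at h1
  have hz : trmul S 0 = 0 := by simp [trmul]
  simp only [hz, Finset.sum_const, Finset.card_univ, Fintype.card_fin, nsmul_eq_mul, zero_add] at h1
  set F := ∑ i, trexp (S + Y i)
  set G := (n : ℝ) * trexp S with hG
  have hG0 : 0 ≤ G := mul_nonneg (by positivity) (trexp_nonneg S)
  have h2 : (1 - a) * F ≤ (1 + a) * G := by linarith
  have h3 : F ≤ (1 + a) * (1 + 2 * a) * G := by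
    have : 1 ≤ (1 - a) * (1 + 2 * a) := by nlinarith
    have hF : 0 ≤ F := Finset.sum_nonneg fun _ _ => trexp_nonneg _
    nlinarith [mul_le_mul_of_nonneg_right this hF, mul_le_mul_of_nonneg_left h2 (by linarith : 0 ≤ 1 + 2 * a)]
  have h4 : (1 + a) * (1 + 2 * a) ≤ Real.exp (3 * r ^ 2) := by
    calc (1 + a) * (1 + 2 * a) ≤ Real.exp (2 * a) * Real.exp (2 * a) := by
          have := Real.add_one_le_exp (2 * a)
          apply mul_le_mul <;> first | positivity | linarith
      _ ≤ Real.exp (3 * r ^ 2) := by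
          rw [← Real.exp_add]; apply Real.exp_le_exp.2; linarith
  calc F ≤ (1 + a) * (1 + 2 * a) * G := h3
    _ ≤ Real.exp (3 * r ^ 2) * G := mul_le_mul_of_nonneg_right h4 hG0
    _ = _ := by rw [hG]; ring

lemma mgf_bound {p n : ℕ} {Y : Fin n → EV p →L[ℝ] EV p}
    (hY : ∀ i, SymOp (Y i)) (h0 : ∑ i, Y i = 0) {r : ℝ} (hr : ∀ i, ‖Y i‖ ≤ r) (hr1 : r ^ 2 ≤ 1)
    (s : ℕ) :
    ∑ ω : Fin s → Fin n, trexp (∑ k, Y (ω k)) ≤ (n * Real.exp (3 * r ^ 2)) ^ s * p := by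
  induction s with
  | zero =>
    have h : ∀ i, el (0 : EV p →L[ℝ] EV p) i = 0 := fun i => by
      rw [el_eq SymOp.zero]; simp
    simp [trexp, h]
  | succ s ih =>
    rw [← (Fin.consEquiv (fun _ : Fin (s + 1) => Fin n)).sum_comp, Fintype.sum_prod_type_right]
    have : ∀ ω : Fin s → Fin n, ∑ i : Fin n, trexp (∑ k, Y ((Fin.consEquiv (fun _ : Fin (s + 1) => Fin n)) (i, ω) k))
        ≤ n * Real.exp (3 * r ^ 2) * trexp (∑ k, Y (ω k)) := fun ω => by
      refine le_trans (le_of_eq ?_) (step_bound (SymOp.sum _ fun k => hY (ω k)) hY h0 hr hr1)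
      refine Finset.sum_congr rfl fun i _ => ?_
      rw [Fin.sum_univ_succ, add_comm]; simp [Fin.consEquiv]
    calc _ ≤ ∑ ω : Fin s → Fin n, n * Real.exp (3 * r ^ 2) * trexp (∑ k, Y (ω k)) :=
          Finset.sum_le_sum fun ω _ => this ω
      _ ≤ n * Real.exp (3 * r ^ 2) * ((n * Real.exp (3 * r ^ 2)) ^ s * p) := by
          rw [← Finset.mul_sum]; gcongr
      _ = _ := by ring

open Classical in
lemma tail_count {p n : ℕ} {X : Fin n → EV p →L[ℝ] EV p}
    (hX : ∀ i, SymOp (X i)) (h0 : ∑ i, X i = 0) {K t : ℝ} (hK : 0 < K) (hr : ∀ i, ‖X i‖ ≤ K)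
    (ht : 0 < t) (htK : t ≤ K) (s : ℕ) :
    ((Finset.univ.filter fun ω : Fin s → Fin n => s * t < ‖∑ k, X (ω k)‖).card : ℝ) ≤
      n ^ s * (2 * p * Real.exp (- (s * (t ^ 2 / (16 * K ^ 2))))) := by
  set θ := t / (4 * K ^ 2) with hθ
  have hθ0 : 0 < θ := by positivity
  have hq : t ^ 2 / K ^ 2 ≤ 1 := by
    rw [div_le_one (by positivity)]; exact pow_le_pow_left₀ ht.le htK 2
  have hr2 : (θ * K) ^ 2 = (t ^ 2 / K ^ 2) / 16 := by rw [hθ]; field_simp; norm_num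
  have gen : ∀ a : ℝ, |a| = θ → ∑ ω : Fin s → Fin n, trexp (a • ∑ k, X (ω k)) ≤
      (n * Real.exp (3 * (θ * K) ^ 2)) ^ s * p := fun a ha => by
    have := mgf_bound (Y := fun i => a • X i) (r := θ * K) (fun i => (hX i).smul a)
      (by rw [← Finset.smul_sum, h0, smul_zero])
      (fun i => by rw [norm_smul, Real.norm_eq_abs, ha]; exact mul_le_mul_of_nonneg_left (hr i) hθ0.le)
      (by rw [hr2]; linarith) s
    simpa only [Finset.smul_sum] using this
  have g1 := gen θ (abs_of_pos hθ0)
  have g2 := gen (-θ) (by rw [abs_neg, abs_of_pos hθ0])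
  set B := Finset.univ.filter fun ω : Fin s → Fin n => s * t < ‖∑ k, X (ω k)‖
  have m : (B.card : ℝ) * Real.exp (θ * (s * t)) ≤
      ∑ ω : Fin s → Fin n, (trexp (θ • ∑ k, X (ω k)) + trexp ((-θ) • ∑ k, X (ω k))) := by
    calc (B.card : ℝ) * Real.exp (θ * (s * t)) = ∑ ω ∈ B, Real.exp (θ * (s * t)) := by simp
      _ ≤ ∑ ω ∈ B, (trexp (θ • ∑ k, X (ω k)) + trexp ((-θ) • ∑ k, X (ω k))) := by
          refine Finset.sum_le_sum fun ω hω => ?_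
          have hS : SymOp (∑ k, X (ω k)) := SymOp.sum _ fun k => hX (ω k)
          have hneg : (-θ) • ∑ k, X (ω k) = -(θ • ∑ k, X (ω k)) := by
            ext x i; simp
          have hS' := hS.smul (-θ)
          rw [hneg] at hS' ⊢
          refine exp_norm_le (hS.smul θ) hS' (by positivity) ?_
          rw [norm_smul, Real.norm_eq_abs, abs_of_pos hθ0]
          exact mul_lt_mul_of_pos_left (Finset.mem_filter.1 hω).2 hθ0
      _ ≤ _ := Finset.sum_le_sum_of_subset_of_nonneg (Finset.subset_univ _)
          fun _ _ _ => add_nonneg (trexp_nonneg _) (trexp_nonneg _)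
  rw [Finset.sum_add_distrib] at m
  have m2 : (B.card : ℝ) * Real.exp (θ * (s * t)) ≤ 2 * p * (n * Real.exp (3 * (θ * K) ^ 2)) ^ s := by
    linarith
  rw [← le_div_iff₀ (Real.exp_pos _)] at m2
  refine m2.trans ?_
  rw [mul_pow, ← Real.exp_nat_mul, div_eq_mul_inv, ← Real.exp_neg]
  have : Real.exp (s * (3 * (θ * K) ^ 2)) * Real.exp (-(θ * (s * t))) ≤
      Real.exp (- (s * (t ^ 2 / (16 * K ^ 2)))) := by
    rw [← Real.exp_add]
    apply Real.exp_le_exp.2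
    have e : θ * (s * t) = s * ((t ^ 2 / K ^ 2) / 4) := by rw [hθ]; field_simp
    have e2 : t ^ 2 / (16 * K ^ 2) = (t ^ 2 / K ^ 2) / 16 := by field_simp
    rw [e, hr2, e2]
    have : 0 ≤ (s : ℝ) * (t ^ 2 / K ^ 2) := by positivity
    linarith
  calc _ = (n : ℝ) ^ s * (2 * p * (Real.exp (s * (3 * (θ * K) ^ 2)) * Real.exp (-(θ * (s * t))))) := by ring
    _ ≤ _ := by gcongr

lemma symOp_of_isHermitian {p : ℕ} {M : Matrix (Fin p) (Fin p) ℝ} (h : M.IsHermitian) :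
    SymOp (Matrix.toEuclideanCLM (𝕜 := ℝ) M) := by
  have h1 : IsSelfAdjoint (Matrix.toEuclideanCLM (𝕜 := ℝ) M) := by
    have : IsSelfAdjoint M := h
    exact this.map _
  exact fun x y => (ContinuousLinearMap.isSelfAdjoint_iff_isSymmetric.1 h1) x y

lemma quad_nonneg {p : ℕ} {M : Matrix (Fin p) (Fin p) ℝ} (h : M.PosSemidef) (x : EV p) :
    0 ≤ inner ℝ x (Matrix.toEuclideanCLM (𝕜 := ℝ) M x) := by
  have := h.dotProduct_mulVec_nonneg x.ofLp
  rw [PiLp.inner_apply]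
  simp only [dotProduct] at this
  simpa [mul_comm] using this

/-- matrix Bernstein concentration of the sub-sampled Hessian:
if `A₁, …, Aₙ` are symmetric PSD `p×p` matrices with `‖Aᵢ‖ ≤ K`, `Ā` is their average,
and `s ≥ 16 K² log(2p/δ)/(c²ε²)` indices are drawn i.i.d. uniformly from `{1,…,n}`
(equivalently, a uniformly random tuple `ω : Fin s → Fin n`), then with probability at
least `1 - δ` the sampled average `H = (1/s) Σ_k A_{ω k}` satisfies `‖H - Ā‖ ≤ ε c`. -/
theorem subsampled_hessian_concentration {p n : ℕ} (hp : 0 < p) (hn : 0 < n)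
    (A : Fin n → Matrix (Fin p) (Fin p) ℝ)
    (K c ε δ : ℝ)
    (hpsd : ∀ i, (A i).PosSemidef)
    (hbnd : ∀ i, specNorm (A i) ≤ K)
    (hc : 0 < c) (hε0 : 0 < ε) (hε1 : ε < 1) (hδ0 : 0 < δ) (hδ1 : δ < 1)
    (s : ℕ) (hs : 0 < s)
    (hsize : 16 * K ^ 2 * Real.log (2 * p / δ) / (c ^ 2 * ε ^ 2) ≤ (s : ℝ)) :
    haveI : Nonempty (Fin n) := Fin.pos_iff_nonempty.mp hn
    ENNReal.ofReal (1 - δ) ≤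
      (PMF.uniformOfFintype (Fin s → Fin n)).toMeasure
        {ω | specNorm ((s : ℝ)⁻¹ • ∑ k : Fin s, A (ω k) -
              (n : ℝ)⁻¹ • ∑ i : Fin n, A i) ≤ ε * c} := by
  classical
  haveI : Nonempty (Fin n) := Fin.pos_iff_nonempty.mp hn
  have hnR : (0 : ℝ) < n := by exact_mod_cast hn
  have hsR : (0 : ℝ) < s := by exact_mod_cast hs
  have ht : 0 < ε * c := mul_pos hε0 hc
  set Abar : Matrix (Fin p) (Fin p) ℝ := (n : ℝ)⁻¹ • ∑ i : Fin n, A i with hAbar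
  set X : Fin n → EV p →L[ℝ] EV p := fun i => Matrix.toEuclideanCLM (𝕜 := ℝ) (A i - Abar) with hXdef
  have hK0 : 0 ≤ K := (norm_nonneg _).trans (hbnd ⟨0, hn⟩)
  have hherm : Abar.IsHermitian := by
    have h1 : (∑ i : Fin n, A i).PosSemidef := Matrix.posSemidef_sum _ fun i _ => hpsd i
    exact (h1.smul (inv_nonneg.2 hnR.le)).isHermitian
  have hX : ∀ i, SymOp (X i) := fun i => symOp_of_isHermitian ((hpsd i).isHermitian.sub hherm)
  have h0 : ∑ i, X i = 0 := by
    rw [hXdef]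
    simp only [← map_sum]
    rw [Finset.sum_sub_distrib, Finset.sum_const, Finset.card_univ, Fintype.card_fin, hAbar,
      ← Nat.cast_smul_eq_nsmul ℝ, smul_smul, mul_inv_cancel₀ hnR.ne', one_smul, sub_self, map_zero]
  have hqA : ∀ i (x : EV p), ‖x‖ = 1 →
      0 ≤ inner ℝ x (Matrix.toEuclideanCLM (𝕜 := ℝ) (A i) x) ∧
      inner ℝ x (Matrix.toEuclideanCLM (𝕜 := ℝ) (A i) x) ≤ K := fun i x hx => by
    refine ⟨quad_nonneg (hpsd i) x, (real_inner_le_norm _ _).trans ?_⟩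
    rw [hx, one_mul]
    refine (ContinuousLinearMap.le_opNorm _ _).trans ?_
    rw [hx, mul_one]
    exact hbnd i
  have hqbar : ∀ x : EV p, inner ℝ x (Matrix.toEuclideanCLM (𝕜 := ℝ) Abar x) =
      (n : ℝ)⁻¹ * ∑ i, inner ℝ x (Matrix.toEuclideanCLM (𝕜 := ℝ) (A i) x) := fun x => by
    rw [hAbar, map_smul, map_sum, _root_.smul_apply, _root_.sum_apply, real_inner_smul_right,
      inner_sum]
  have hXK : ∀ i, ‖X i‖ ≤ K := fun i => by
    refine norm_le_of_quad (hX i) hK0 fun x hx => ?_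
    have e : inner ℝ x (X i x) = inner ℝ x (Matrix.toEuclideanCLM (𝕜 := ℝ) (A i) x) -
        inner ℝ x (Matrix.toEuclideanCLM (𝕜 := ℝ) Abar x) := by
      rw [hXdef]; simp only [map_sub]; rw [_root_.sub_apply, inner_sub_right]
    have b1 : 0 ≤ inner ℝ x (Matrix.toEuclideanCLM (𝕜 := ℝ) Abar x) := by
      rw [hqbar]
      exact mul_nonneg (inv_nonneg.2 hnR.le) (Finset.sum_nonneg fun j _ => (hqA j x hx).1)
    have b2 : inner ℝ x (Matrix.toEuclideanCLM (𝕜 := ℝ) Abar x) ≤ K := by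
      rw [hqbar, inv_mul_le_iff₀ hnR]
      calc _ ≤ ∑ _j : Fin n, K := Finset.sum_le_sum fun j _ => (hqA j x hx).2
        _ = n * K := by simp
    have b3 := hqA i x hx
    rw [e]
    exact abs_le.2 ⟨by linarith [b3.1], by linarith [b3.2]⟩
  have hnorm : ∀ ω : Fin s → Fin n, specNorm ((s : ℝ)⁻¹ • ∑ k : Fin s, A (ω k) - Abar) =
      (s : ℝ)⁻¹ * ‖∑ k, X (ω k)‖ := fun ω => by
    have e : (s : ℝ)⁻¹ • ∑ k : Fin s, A (ω k) - Abar = (s : ℝ)⁻¹ • ∑ k, (A (ω k) - Abar) := by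
      rw [Finset.sum_sub_distrib, Finset.sum_const, Finset.card_univ, Fintype.card_fin,
        ← Nat.cast_smul_eq_nsmul ℝ, smul_sub, smul_smul, inv_mul_cancel₀ hsR.ne', one_smul]
    rw [e, specNorm, map_smul, map_sum, norm_smul, Real.norm_eq_abs, abs_of_pos (inv_pos.2 hsR)]
  set t := ε * c with htdef
  have hcount : ((Finset.univ.filter fun ω : Fin s → Fin n => s * t < ‖∑ k, X (ω k)‖).card : ℝ) ≤
      n ^ s * δ := by
    rcases le_or_gt K t with hKt | hKt
    · rw [Finset.filter_false_of_mem]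
      · simp only [Finset.card_empty, Nat.cast_zero]; positivity
      · intro ω _
        rw [not_lt]
        calc _ ≤ ∑ k, ‖X (ω k)‖ := norm_sum_le _ _
          _ ≤ ∑ _k : Fin s, t := Finset.sum_le_sum fun k _ => (hXK _).trans hKt
          _ = s * t := by simp
    · have hK : 0 < K := ht.trans hKt
      refine (tail_count hX h0 hK hXK ht hKt.le s).trans ?_
      refine mul_le_mul_of_nonneg_left ?_ (by positivity)
      have hpR : (0 : ℝ) < p := by exact_mod_cast hp
      have hL : Real.log (2 * p / δ) ≤ s * (t ^ 2 / (16 * K ^ 2)) := by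
        rw [div_le_iff₀ (by positivity)] at hsize
        rw [← mul_div_assoc, le_div_iff₀ (by positivity), htdef]
        linarith
      have h2 : 2 * p / δ ≤ Real.exp (s * (t ^ 2 / (16 * K ^ 2))) := by
        rw [← Real.log_le_iff_le_exp (by positivity)]; exact hL
      rw [Real.exp_neg, ← div_eq_mul_inv, div_le_iff₀ (Real.exp_pos _)]
      rw [div_le_iff₀ hδ0] at h2
      linarith
  have hms : MeasurableSet {ω : Fin s → Fin n | specNorm ((s : ℝ)⁻¹ • ∑ k : Fin s, A (ω k) - Abar) ≤ t} :=
    (Set.toFinite _).measurableSet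
  rw [PMF.toMeasure_uniformOfFintype_apply _ hms]
  have hset : Fintype.card {ω : Fin s → Fin n | specNorm ((s : ℝ)⁻¹ • ∑ k : Fin s, A (ω k) - Abar) ≤ t}
      = (Finset.univ.filter fun ω : Fin s → Fin n => ¬ s * t < ‖∑ k, X (ω k)‖).card := by
    rw [← Set.toFinset_card]
    congr 1
    ext ω
    simp only [Set.mem_toFinset, Set.mem_setOf_eq, Finset.mem_filter, Finset.mem_univ, true_and,
      hnorm, not_lt, inv_mul_le_iff₀ hsR]
  have hsplit := Finset.card_filter_add_card_filter_not (s := (Finset.univ : Finset (Fin s → Fin n)))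
    (fun ω : Fin s → Fin n => s * t < ‖∑ k, X (ω k)‖)
  rw [hset]
  have hcard : Fintype.card (Fin s → Fin n) = n ^ s := by simp
  rw [Finset.card_univ, hcard] at hsplit
  rw [hcard]
  have hR : (n : ℝ) ^ s * (1 - δ) ≤
      ((Finset.univ.filter fun ω : Fin s → Fin n => ¬ s * t < ‖∑ k, X (ω k)‖).card : ℝ) := by
    have : ((Finset.univ.filter fun ω : Fin s → Fin n => s * t < ‖∑ k, X (ω k)‖).card : ℝ) +
      ((Finset.univ.filter fun ω : Fin s → Fin n => ¬ s * t < ‖∑ k, X (ω k)‖).card : ℝ) =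
        (n : ℝ) ^ s := by exact_mod_cast hsplit
    linarith
  have hpos : (0 : ℝ) < (n ^ s : ℕ) := by exact_mod_cast Nat.pow_pos hn
  rw [← ENNReal.ofReal_natCast, ← ENNReal.ofReal_natCast, ← ENNReal.ofReal_div_of_pos hpos]
  apply ENNReal.ofReal_le_ofReal
  rw [le_div_iff₀ hpos]
  push_cast
  linarith
end
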